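/- Let G be a contraction critical quasi 5-connected graph satisfying d_G(u) + d_G(v) ≥ 9 for all pairs of vertices u, v at distance one or two. Then for every vertex x of degree 4 in G, the subgraph induced by N_G(x) is isomorphic to 2K₂ (two disjoint edges on the four neighbors). -/

import Mathlib

/-!
Let `N` be the neighbourhood of a vertex `x` of degree 4. By the degree condition all vertices at
distance one or two from `x` have degree at least 5. Call a separator of five vertices *good* if
both sides have at least two vertices. Since contracting an edge `ab` destroys quasi
5-connectivity, `a` and `b` lie in a common good separator as soon as all their common neighbours
have degree at least 5 (`exists_good`); this applies to every edge at `x`. Each vertex of a good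
separator has neighbours on both sides.

The main tool is `Good.cross`: if a good separator `T` through `x` has a side `A` with a single
neighbour `z` of `x`, then any good separator `T'` through `x` and `z` contains `A`, and `|A| = 2`,
`T ∩ T' = {x}`, and `T` and `T'` bisect each other. It follows by uncrossing: a corner inside `A`
contains no neighbour of `x`, so `x` can be dropped from its boundary; a corner whose boundary then
has at most four vertices is empty, because it could only be a vertex of degree 4 within distance
two of `x`.

If some good separator through `x` contains two vertices of `N`, each side contains exactly one,
so both sides have two vertices, the whole graph has nine vertices and almost all its edges are
known; a further good separator through an edge far from `x` then splits `N` into two parts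
without edges between them, which forces a perfect matching (`matched_of_nine`).

Otherwise every good separator through `x` contains at most one vertex of `N`. For `y ∈ N`, a good
separator through `x` and `y` isolates some `z ∈ N` on a side `A = {z, u}`, and crossing with a
good separator through `x` and `z` shows that this one isolates `y` on a side `{y, u'}`. All
neighbours of `y`, `z`, `u`, `u'` are then known, `z` is the only possible neighbour of `y` in `N`
and vice versa, and if `y` and `z` were not adjacent, the edge `zu'` would lie in no good separator
(`no_good_of_twins`). So `y` and `z` are matched (`matched_of_one`).
-/

open SimpleGraph Set

variable {V : Type*}

/-- `G` is `k`-connected: more than `k` vertices and removing fewer than `k`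
vertices leaves a connected graph. -/
def IsKConnected (k : ℕ) [Fintype V] (G : SimpleGraph V) : Prop :=
  k + 1 ≤ Fintype.card V ∧
    ∀ S : Set V, S.ncard < k → (G.induce Sᶜ).Connected

/-- Contraction of the edge `xy`: identify `y` with `x`, simplifying multiple edges. -/
def contractE [DecidableEq V] (G : SimpleGraph V) (x y : V) :
    SimpleGraph {v : V // v ≠ y} :=
  SimpleGraph.fromRel (fun a b =>
    G.Adj a.1 b.1 ∨ (a.1 = x ∧ G.Adj y b.1) ∨ (b.1 = x ∧ G.Adj y a.1))

/-- The (outer) neighborhood of a vertex set `A`. -/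
def gBoundary (G : SimpleGraph V) (A : Set V) : Set V :=
  {v | v ∉ A ∧ ∃ a ∈ A, G.Adj v a}

/-- `S` separates `G`: the rest of the graph splits into two nonempty parts
with no edges between them. -/
def Separates (G : SimpleGraph V) (S : Set V) : Prop :=
  ∃ A B : Set V, A.Nonempty ∧ B.Nonempty ∧ Disjoint A B ∧ A ∪ B = Sᶜ ∧
    ∀ a ∈ A, ∀ b ∈ B, ¬ G.Adj a b

/-- `T` is a nontrivial 4-cut: `|T| = 4` and `G - T` splits into two parts,
each of size at least 2, with no edges between them. -/
def IsNontrivialFourCut (G : SimpleGraph V) (T : Set V) : Prop :=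
  T.ncard = 4 ∧ ∃ A B : Set V, 2 ≤ A.ncard ∧ 2 ≤ B.ncard ∧ Disjoint A B ∧
    A ∪ B = Tᶜ ∧ ∀ a ∈ A, ∀ b ∈ B, ¬ G.Adj a b

/-- `G` is quasi 5-connected: 4-connected without a nontrivial 4-cut. -/
def QuasiFiveConnected [Fintype V] (G : SimpleGraph V) : Prop :=
  IsKConnected 4 G ∧ ∀ T : Set V, ¬ IsNontrivialFourCut G T

/-- `G` is contraction critical quasi 5-connected. -/
def ContractionCriticalQuasiFive [Fintype V] [DecidableEq V] (G : SimpleGraph V) : Prop :=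
  QuasiFiveConnected G ∧
    ∀ x y : V, G.Adj x y → ¬ QuasiFiveConnected (contractE G x y)

/-- `A` is a fragment of `G`: both `A` and its "far side" are nonempty and the
neighborhood of `A` is a smallest separating set. -/
def IsFragment (G : SimpleGraph V) (A : Set V) : Prop :=
  A.Nonempty ∧ (Aᶜ \ gBoundary G A).Nonempty ∧
    ∀ S : Set V, Separates G S → (gBoundary G A).ncard ≤ S.ncard

/-- A nontrivial fragment: both sides have at least two vertices. -/
def IsNontrivialFragment (G : SimpleGraph V) (A : Set V) : Prop :=
  IsFragment G A ∧ 2 ≤ A.ncard ∧ 2 ≤ (Aᶜ \ gBoundary G A).ncard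

/-- Degree sum at least 9 for every pair of vertices at distance one or two. -/
def DegSumNine (G : SimpleGraph V) : Prop :=
  ∀ u v : V, (G.dist u v = 1 ∨ G.dist u v = 2) →
    9 ≤ (G.neighborSet u).ncard + (G.neighborSet v).ncard

/-! ### Separations -/

/-- A separation of `G`, encoded as a partition of the vertex set into two sides `A`, `B` and a
separator `T`, with no edge joining the two sides. The sides may be empty. -/
structure IsSep (G : SimpleGraph V) (A T B : Finset V) : Prop where
  disjAT : ∀ v ∈ A, v ∉ T
  disjAB : ∀ v ∈ A, v ∉ B
  disjTB : ∀ v ∈ T, v ∉ B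
  cover : ∀ v, v ∈ A ∨ v ∈ T ∨ v ∈ B
  noAdj : ∀ a ∈ A, ∀ b ∈ B, ¬ G.Adj a b

theorem IsSep.symm {G : SimpleGraph V} {A T B : Finset V} (h : IsSep G A T B) :
    IsSep G B T A where
  disjAT v hv hT := h.disjTB v hT hv
  disjAB v hv hA := h.disjAB v hA hv
  disjTB v hv hA := h.disjAT v hA hv
  cover v := by have := h.cover v; tauto
  noAdj b hb a ha hab := h.noAdj a ha b hb hab.symm

/-- Two crossing separations produce a separation at each corner `A ∩ A'`. -/
theorem IsSep.corner [DecidableEq V] {G : SimpleGraph V} {A T B A' T' B' : Finset V}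
    (h : IsSep G A T B) (h' : IsSep G A' T' B') :
    IsSep G (A ∩ A') ((A ∩ T') ∪ (T ∩ T') ∪ (T ∩ A')) (B ∪ B') := by
  obtain ⟨h1, h2, h3, h4, h5⟩ := h
  obtain ⟨h1', h2', h3', h4', h5'⟩ := h'
  constructor <;> grind

/-- Shifting a separator: the set `M ⊆ T` joins the side `B`, and the neighbours of `M` in `A`
(all contained in `K`) take its place in the separator. -/
theorem IsSep.shift [DecidableEq V] {G : SimpleGraph V} {A T B : Finset V} (h : IsSep G A T B)
    (M K : Finset V) (hM : M ⊆ T) (hK : K ⊆ A) (hMK : ∀ m ∈ M, ∀ a ∈ A, G.Adj m a → a ∈ K) :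
    IsSep G (A \ K) ((T \ M) ∪ K) (B ∪ M) := by
  obtain ⟨h1, h2, h3, h4, h5⟩ := h
  constructor
  · grind
  · grind
  · grind
  · grind
  · intro a ha b hb hab
    have := hab.symm
    grind

theorem IsSep.cards [DecidableEq V] {G : SimpleGraph V} {A T B : Finset V} (h : IsSep G A T B)
    (S : Finset V) : (A ∩ S).card + (T ∩ S).card + (B ∩ S).card = S.card := by
  obtain ⟨h1, h2, h3, h4, h5⟩ := h
  rw [← Finset.card_union_of_disjoint, ← Finset.card_union_of_disjoint]
  · congr 1; ext v; have := h4 v; grind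
  · rw [Finset.disjoint_left]; grind
  · rw [Finset.disjoint_left]; grind

/-- If `S` contains all neighbours of `z` and has at most `deg z` elements, then `z` is adjacent to
all of `S`. -/
theorem adj_of_card_le {G : SimpleGraph V} {z : V} {S : Finset V}
    (hS : ∀ v, G.Adj z v → v ∈ S) (hc : S.card ≤ (G.neighborSet z).ncard) :
    ∀ v ∈ S, G.Adj z v := by
  have h : G.neighborSet z = (S : Set V) :=
    Set.eq_of_subset_of_ncard_le (fun v hv => hS v hv) (by rwa [Set.ncard_coe_finset])
      (Finset.finite_toSet S)
  intro v hv
  have : v ∈ G.neighborSet z := by rw [h]; exact hv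
  exact this

theorem deg_le_card {G : SimpleGraph V} {z : V} {S : Finset V}
    (hS : ∀ v, G.Adj z v → v ∈ S) : (G.neighborSet z).ncard ≤ S.card := by
  rw [← Set.ncard_coe_finset]
  exact Set.ncard_le_ncard (fun v hv => hS v hv) (Finset.finite_toSet S)

/-- The consequences of quasi 5-connectivity for separations: a separator of two nonempty sides has
at least four vertices, and if it has exactly four, one side is at most a single vertex. -/
structure QFive (G : SimpleGraph V) : Prop where
  four_le : ∀ A T B : Finset V, IsSep G A T B → A.Nonempty → B.Nonempty → 4 ≤ T.card
  trivial : ∀ A T B : Finset V, IsSep G A T B → T.card = 4 → A.card ≤ 1 ∨ B.card ≤ 1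

/-- A vertex `x` of degree 4 with neighbourhood `N`, such that all vertices at distance one or two
from `x` have degree at least 5. -/
structure Center (G : SimpleGraph V) (x : V) (N : Finset V) : Prop where
  mem : ∀ v, v ∈ N ↔ G.Adj x v
  card : N.card = 4
  deg_one : ∀ v, G.Adj x v → 5 ≤ (G.neighborSet v).ncard
  deg_two : ∀ v w, G.Adj x v → G.Adj v w → w ≠ x → 5 ≤ (G.neighborSet w).ncard

/-- A separation of order five both of whose sides have at least two vertices. -/
structure Good (G : SimpleGraph V) (A T B : Finset V) : Prop where
  sep : IsSep G A T B
  card : T.card = 5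
  left : 2 ≤ A.card
  right : 2 ≤ B.card

theorem Good.symm {G : SimpleGraph V} {A T B : Finset V} (h : Good G A T B) : Good G B T A :=
  ⟨h.sep.symm, h.card, h.right, h.left⟩

/-- Without nontrivial 4-cuts, every vertex of a good separator has a neighbour on each side. -/
theorem Good.exists_adj [DecidableEq V] {G : SimpleGraph V} (hQ : QFive G) {A T B : Finset V}
    (h : Good G A T B) {t : V} (ht : t ∈ T) : ∃ a ∈ A, G.Adj t a := by
  by_contra! hno
  have hs := h.sep.shift {t} ∅ (by simpa using ht) (by simp) (by simpa using hno)
  have hT : ((T \ {t}) ∪ ∅).card = 4 := by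
    rw [Finset.union_empty, Finset.card_sdiff_of_subset (by simpa using ht), h.card]; simp
  have hB : B.card ≤ (B ∪ {t}).card := Finset.card_le_card Finset.subset_union_left
  have := hQ.trivial _ _ _ hs hT
  have h1 := h.left
  have h2 := h.right
  rw [Finset.sdiff_empty] at this
  omega

/-- A separator `S` of order at most 4 that meets the closed neighbourhood of `x`, with at least two
vertices on the side `D`, leaves no other side `C` avoiding `x`: such a side could only be a single
vertex of degree at most 4 within distance two of `x`. -/
theorem empty_of_card_le_four {G : SimpleGraph V} (hQ : QFive G) {x : V} {N : Finset V}
    (hx : Center G x N) {C S D : Finset V} (h : IsSep G C S D) (hS : S.card ≤ 4)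
    (hD : 2 ≤ D.card) (hxC : x ∉ C) {y : V} (hy : y ∈ S) (hyx : y = x ∨ y ∈ N) : C = ∅ := by
  by_contra hne
  have hC : C.Nonempty := Finset.nonempty_iff_ne_empty.2 hne
  have hDn : D.Nonempty := Finset.card_pos.1 (by omega)
  have h4 := hQ.four_le _ _ _ h hC hDn
  have h4' : S.card = 4 := by omega
  have hC1 : C.card = 1 := by
    have := hQ.trivial _ _ _ h h4'
    have := hC.card_pos
    omega
  obtain ⟨z, rfl⟩ := Finset.card_eq_one.1 hC1
  have hzx : z ≠ x := by rintro rfl; exact hxC (by simp)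
  have hsub : ∀ v, G.Adj z v → v ∈ S := by
    intro v hv
    rcases h.cover v with h1 | h1 | h1
    · rw [Finset.mem_singleton] at h1; subst h1; exact absurd hv (G.loopless.irrefl _)
    · exact h1
    · exact absurd hv (h.noAdj z (by simp) v h1)
  have hle := deg_le_card hsub
  by_cases hlow : 4 ≤ (G.neighborSet z).ncard
  · have hzy := adj_of_card_le hsub (by omega) y hy
    have : 5 ≤ (G.neighborSet z).ncard := by
      rcases hyx with rfl | hyN
      · exact hx.deg_one z hzy.symm
      · exact hx.deg_two y z ((hx.mem y).1 hyN) hzy.symm hzx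
    omega
  · classical
    -- A vertex of degree at most 3 would be cut off by its neighbourhood.
    have hs' : IsSep G {z} (S.filter fun v => G.Adj z v) (D ∪ S.filter fun v => ¬ G.Adj z v) := by
      have := h.shift (S.filter fun v => ¬ G.Adj z v) ∅ (by simp) (by simp) (by
        intro m hm a ha hma
        rw [Finset.mem_singleton] at ha; subst ha
        exact absurd hma.symm (Finset.mem_filter.1 hm).2)
      convert this using 1
      · simp
      · ext; simp; tauto
    have hf := hQ.four_le _ _ _ hs' (by simp) (hDn.mono Finset.subset_union_left)
    have : (S.filter fun v => G.Adj z v).card ≤ (G.neighborSet z).ncard := by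
      rw [← Set.ncard_coe_finset]
      exact Set.ncard_le_ncard (by intro v hv; simp at hv; exact hv.2)
        ((Finset.finite_toSet S).subset fun v hv => hsub v hv)
    omega

/-- A separator of order at most 5 that contains `x` and a neighbour of `x`, with at least two
vertices on the side `D`, has no other side `C` free of neighbours of `x`, because `x` is redundant
for separating such a side. -/
theorem empty_of_card_le_five [DecidableEq V] {G : SimpleGraph V} (hQ : QFive G) {x : V}
    {N : Finset V} (hx : Center G x N) {C S D : Finset V} (h : IsSep G C S D) (hS : S.card ≤ 5)
    (hD : 2 ≤ D.card) (hxS : x ∈ S) {y : V} (hy : y ∈ S) (hyN : y ∈ N)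
    (hC : ∀ v ∈ C, v ∉ N) : C = ∅ := by
  have hs := h.shift {x} ∅ (by simpa using hxS) (by simp) (by
    intro m hm a ha hma
    rw [Finset.mem_singleton] at hm; subst hm
    exact absurd ((hx.mem a).2 hma) (hC a ha))
  rw [Finset.sdiff_empty, Finset.union_empty] at hs
  have hxy : y ≠ x := by rintro rfl; exact G.loopless.irrefl _ ((hx.mem y).1 hyN)
  refine empty_of_card_le_four hQ hx hs ?_ ?_ ?_ (y := y) ?_ (Or.inr hyN)
  · rw [Finset.card_sdiff_of_subset (by simpa using hxS)]; simp; omega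
  · exact hD.trans (Finset.card_le_card Finset.subset_union_left)
  · exact fun hxC => h.disjAT x hxC hxS
  · simp [hy, hxy]

/-! ### Crossing two good separations at a vertex of degree 4 -/

/-- If a good separator `T` contains `x` and its side `A` contains a single
neighbour `z` of `x`, then `A` has only two vertices, and every good separator `T'` through `x`
and `z` contains `A` and crosses `T` in the most balanced way. -/
theorem Good.cross [DecidableEq V] {G : SimpleGraph V} (hQ : QFive G) {x : V} {N : Finset V}
    (hx : Center G x N) {A T B A' T' B' : Finset V} (h : Good G A T B) (h' : Good G A' T' B')
    {z : V} (hxT : x ∈ T) (hxT' : x ∈ T') (hzT' : z ∈ T') (hzA : z ∈ A) (hzN : z ∈ N)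
    (huniq : ∀ v ∈ A, v ∈ N → v = z) :
    A ⊆ T' ∧ A.card = 2 ∧ T ∩ T' = {x} ∧ (T ∩ A').card = 2 ∧ (T ∩ B').card = 2 ∧
      (B ∩ T').card = 2 := by
  have hcard : ∀ X Y U : Finset V, (X ∪ Y ∪ U).card ≤ X.card + Y.card + U.card :=
    fun X Y U => (Finset.card_union_le _ _).trans
      (Nat.add_le_add_right (Finset.card_union_le _ _) _)
  have eT' := h.sep.cards T'
  have eT := h'.sep.cards T
  have eA := h'.sep.cards A
  have eB := h'.sep.cards B
  have eA' := h.sep.cards A'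
  have eB' := h.sep.cards B'
  rw [Finset.inter_comm A' T, Finset.inter_comm T' T, Finset.inter_comm B' T] at eT
  rw [Finset.inter_comm A' A, Finset.inter_comm T' A, Finset.inter_comm B' A] at eA
  rw [Finset.inter_comm A' B, Finset.inter_comm T' B, Finset.inter_comm B' B] at eB
  have ht : 1 ≤ (T ∩ T').card := Finset.card_pos.2 ⟨x, by simp [hxT, hxT']⟩
  have cT := h.card
  have cT' := h'.card
  have cA := h.left
  have cB := h.right
  have cA' := h'.left
  have cB' := h'.right
  -- The corners inside `A` are empty once their boundary has at most 5 vertices.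
  have near : ∀ X' Y', Good G X' T' Y' →
      (A ∩ T').card + (T ∩ T').card + (T ∩ X').card ≤ 5 → (A ∩ X').card = 0 := by
    intro X' Y' g hle
    rw [Finset.card_eq_zero]
    refine empty_of_card_le_five hQ hx (h.sep.corner g.sep)
      ((hcard _ _ _).trans hle) (cB.trans (Finset.card_le_card Finset.subset_union_left))
      (by simp [hxT, hxT']) (y := z) (by simp [hzA, hzT']) hzN ?_
    intro v hv hvN
    rw [Finset.mem_inter] at hv
    have := huniq v hv.1 hvN
    subst this
    exact g.sep.disjAT v hv.2 hzT'
  -- The corners inside `B` are empty once their boundary has at most 4 vertices.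
  have far : ∀ X' Y', Good G X' T' Y' →
      (B ∩ T').card + (T ∩ T').card + (T ∩ X').card ≤ 4 → (B ∩ X').card = 0 := by
    intro X' Y' g hle
    rw [Finset.card_eq_zero]
    refine empty_of_card_le_four hQ hx (h.sep.symm.corner g.sep)
      ((hcard _ _ _).trans hle) (cA.trans (Finset.card_le_card Finset.subset_union_left))
      ?_ (y := x) (by simp [hxT, hxT']) (Or.inl rfl)
    intro hxB
    exact h.sep.disjTB x hxT (Finset.mem_inter.1 hxB).1
  have n1 := near A' B' h'
  have n2 := near B' A' h'.symm
  have f1 := far A' B' h'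
  have f2 := far B' A' h'.symm
  have key : (A ∩ T').card = A.card ∧ A.card = 2 ∧ (T ∩ T').card = 1 ∧ (T ∩ A').card = 2 ∧
      (T ∩ B').card = 2 ∧ (B ∩ T').card = 2 := by
    omega
  obtain ⟨k1, k2, k3, k4, k5, k6⟩ := key
  refine ⟨?_, k2, ?_, k4, k5, k6⟩
  · rw [← Finset.inter_eq_left]
    exact Finset.eq_of_subset_of_card_le Finset.inter_subset_left k1.ge
  · symm
    exact Finset.eq_of_subset_of_card_le (by simp [hxT, hxT']) (by simp [k3])

/-! ### Edge contractions -/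

theorem exists_sep_of_not_connected {W : Type*} {H : SimpleGraph W} {S : Set W}
    (hne : Sᶜ.Nonempty) (h : ¬ (H.induce Sᶜ).Connected) :
    ∃ A B : Set W, A.Nonempty ∧ B.Nonempty ∧ Disjoint A B ∧ A ∪ B = Sᶜ ∧
      ∀ a ∈ A, ∀ b ∈ B, ¬ H.Adj a b := by
  have : Nonempty ↥(Sᶜ) := hne.to_subtype
  have hp : ¬ (H.induce Sᶜ).Preconnected := fun hp => h ⟨hp⟩
  unfold SimpleGraph.Preconnected at hp
  push Not at hp
  obtain ⟨u, v, huv⟩ := hp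
  refine ⟨{w | ∃ hw : w ∈ Sᶜ, (H.induce Sᶜ).Reachable u ⟨w, hw⟩},
    {w | ∃ hw : w ∈ Sᶜ, ¬ (H.induce Sᶜ).Reachable u ⟨w, hw⟩},
    ⟨u, u.2, SimpleGraph.Reachable.refl _⟩, ⟨v, v.2, huv⟩, ?_, ?_, ?_⟩
  · rw [Set.disjoint_left]
    rintro w ⟨hw, h1⟩ ⟨_, h2⟩
    exact h2 h1
  · ext w
    constructor
    · rintro (⟨hw, _⟩ | ⟨hw, _⟩) <;> exact hw
    · intro hw
      by_cases hr : (H.induce Sᶜ).Reachable u ⟨w, hw⟩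
      · exact Or.inl ⟨hw, hr⟩
      · exact Or.inr ⟨hw, hr⟩
  · rintro a ⟨ha, h1⟩ b ⟨hb, h2⟩ hab
    refine h2 (h1.trans (SimpleGraph.Adj.reachable ?_))
    exact hab

theorem not_connected_of_sep {W : Type*} {H : SimpleGraph W} {S A B : Set W}
    (hA : A.Nonempty) (hB : B.Nonempty) (hd : Disjoint A B) (hu : A ∪ B = Sᶜ)
    (hno : ∀ a ∈ A, ∀ b ∈ B, ¬ H.Adj a b) : ¬ (H.induce Sᶜ).Connected := by
  intro hc
  obtain ⟨a, ha⟩ := hA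
  obtain ⟨b, hb⟩ := hB
  have haS : a ∈ Sᶜ := hu ▸ Or.inl ha
  have hbS : b ∈ Sᶜ := hu ▸ Or.inr hb
  have step : ∀ u v : ↥(Sᶜ), (H.induce Sᶜ).Walk u v → u.1 ∈ A → v.1 ∈ A := by
    intro u v p
    induction p with
    | nil => exact id
    | @cons u v w huv _ ih =>
      intro hu'
      refine ih ?_
      have hv : v.1 ∈ A ∪ B := by rw [hu]; exact v.2
      exact hv.resolve_right fun hvB => hno _ hu' _ hvB huv
  obtain ⟨p⟩ := hc.preconnected ⟨a, haS⟩ ⟨b, hbS⟩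
  exact Set.disjoint_left.1 hd (step _ _ p ha) hb

theorem QuasiFiveConnected.qFive [Fintype V] {G : SimpleGraph V} (h : QuasiFiveConnected G) :
    QFive G := by
  have hU : ∀ {A T B : Finset V}, IsSep G A T B →
      Disjoint (A : Set V) (B : Set V) ∧ (A : Set V) ∪ B = (T : Set V)ᶜ := by
    intro A T B hs
    refine ⟨Set.disjoint_left.2 fun v hA hB => hs.disjAB v hA hB, ?_⟩
    ext v
    have h1 := hs.disjAT v
    have h2 := hs.disjTB v
    have h3 := hs.cover v
    simp only [Set.mem_union, Finset.mem_coe, Set.mem_compl_iff]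
    tauto
  constructor
  · intro A T B hs hA hB
    by_contra! hlt
    exact not_connected_of_sep hA hB (hU hs).1 (hU hs).2 hs.noAdj
      (h.1.2 T (by rwa [Set.ncard_coe_finset]))
  · intro A T B hs hT
    by_contra! hlt
    exact h.2 T ⟨by rwa [Set.ncard_coe_finset], A, B, by rw [Set.ncard_coe_finset]; omega,
      by rw [Set.ncard_coe_finset]; omega, (hU hs).1, (hU hs).2, hs.noAdj⟩

/-- Expanding the contracted vertex turns a separation of `G / xy` into one of `G`: the new
separator is the old one, or, if it contained the contracted vertex, the old one together
with `y`. -/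
theorem lift_sep [Fintype V] [DecidableEq V] {G : SimpleGraph V} {x y : V} (hxy : G.Adj x y)
    {S A B : Set {v : V // v ≠ y}} (hd : Disjoint A B) (hu : A ∪ B = Sᶜ)
    (hno : ∀ a ∈ A, ∀ b ∈ B, ¬ (contractE G x y).Adj a b) :
    ∃ A' T' B' : Finset V, IsSep G A' T' B' ∧ A.ncard ≤ A'.card ∧ B.ncard ≤ B'.card ∧
      (T'.card = S.ncard ∨ T'.card = S.ncard + 1 ∧ x ∈ T' ∧ y ∈ T') := by
  classical
  have hadj : ∀ a ∈ A, ∀ b ∈ B, ¬ G.Adj a.1 b.1 ∧ ¬ (a.1 = x ∧ G.Adj y b.1) ∧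
      ¬ (b.1 = x ∧ G.Adj y a.1) := by
    intro a ha b hb
    have hab : a ≠ b := by rintro rfl; exact Set.disjoint_left.1 hd ha hb
    have := hno a ha b hb
    rw [contractE, SimpleGraph.fromRel_adj] at this
    tauto
  have himg : ∀ X : Set {v : V // v ≠ y},
      ∃ X' : Finset V, X'.card = X.ncard ∧
        ∀ v, v ∈ X' ↔ ∃ hv : v ≠ y, (⟨v, hv⟩ : {v : V // v ≠ y}) ∈ X := by
    intro X
    refine ⟨(Subtype.val '' X).toFinset, ?_, ?_⟩
    · rw [← Set.ncard_eq_toFinset_card', Set.ncard_image_of_injective _ Subtype.val_injective]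
    · intro v; simp
  obtain ⟨A', cA, mA⟩ := himg A
  obtain ⟨B', cB, mB⟩ := himg B
  obtain ⟨S', cS, mS⟩ := himg S
  have dAB : ∀ v ∈ A', v ∉ B' := by
    intro v h1 h2
    obtain ⟨hv, h1⟩ := (mA v).1 h1
    obtain ⟨_, h2⟩ := (mB v).1 h2
    exact Set.disjoint_left.1 hd h1 h2
  have cov : ∀ v : V, v ≠ y → (v ∈ A' ∨ v ∈ B' ↔ v ∉ S') := by
    intro v hv
    have := Set.ext_iff.1 hu ⟨v, hv⟩
    rw [mA, mB, mS]
    simpa [hv] using this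
  have yA : y ∉ A' := fun h => by simpa using (mA y).1 h
  have yB : y ∉ B' := fun h => by simpa using (mB y).1 h
  have yS : y ∉ S' := fun h => by simpa using (mS y).1 h
  have hx : x ≠ y := hxy.ne
  have nAB : ∀ a ∈ A', ∀ b ∈ B', ¬ G.Adj a b ∧ ¬ (a = x ∧ G.Adj y b) ∧ ¬ (b = x ∧ G.Adj y a) := by
    intro a ha b hb
    obtain ⟨_, ha⟩ := (mA a).1 ha
    obtain ⟨_, hb⟩ := (mB b).1 hb
    exact hadj _ ha _ hb
  by_cases hxS : x ∈ S'
  · refine ⟨A', insert y S', B', ?_, cA.ge, cB.ge, Or.inr ⟨?_, ?_, ?_⟩⟩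
    · constructor <;> grind
    · rw [Finset.card_insert_of_notMem yS, cS]
    · simp [hxS]
    · simp
  · rcases (cov x hx).2 hxS with hxA | hxB
    · refine ⟨insert y A', S', B', ?_, ?_, cB.ge, Or.inl cS⟩
      · constructor <;> grind
      · rw [Finset.card_insert_of_notMem yA, cA]; omega
    · refine ⟨A', S', insert y B', ?_, cA.ge, ?_, Or.inl cS⟩
      · constructor
        · grind
        · grind
        · grind
        · grind
        · intro a ha b hb hab
          have := hab.symm
          grind
      · rw [Finset.card_insert_of_notMem yB, cB]; omega

/-- If contracting `xy` destroys quasi 5-connectivity and all common neighbours of `x` and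
`y` have degree at least 5, then `x` and `y` lie in a common good separator. -/
theorem exists_good [Fintype V] [DecidableEq V] {G : SimpleGraph V} (hQ : QFive G)
    (hV : 6 ≤ Fintype.card V) {x y : V} (hxy : G.Adj x y)
    (hc : ¬ QuasiFiveConnected (contractE G x y))
    (hdeg : ∀ z, G.Adj z x → G.Adj z y → 5 ≤ (G.neighborSet z).ncard) :
    ∃ A T B : Finset V, Good G A T B ∧ x ∈ T ∧ y ∈ T := by
  by_contra hno
  push Not at hno
  have hW : Fintype.card {v : V // v ≠ y} = Fintype.card V - 1 := by
    simp
  -- A single vertex cut off by a 4-cut through `x` and `y` would have degree 4 and be a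
  -- common neighbour.
  have hsingle : ∀ A T B : Finset V, IsSep G A T B → T.card = 4 → x ∈ T → y ∈ T →
      A.card ≤ 1 → A.Nonempty → B.Nonempty → False := by
    intro A T B hs hT hx hy hA hAn hBn
    obtain ⟨z, rfl⟩ := Finset.card_eq_one.1 (le_antisymm hA hAn.card_pos)
    have hz : ∀ t ∈ T, G.Adj z t := by
      intro t ht
      by_contra hzt
      have h1 := hs.shift {t} ∅ (by simpa using ht) (by simp) (by
        intro m hm a ha hma
        rw [Finset.mem_singleton] at hm ha
        subst hm; subst ha
        exact absurd hma.symm hzt)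
      have h2 := hQ.four_le _ _ _ h1 (by simp) (hBn.mono Finset.subset_union_left)
      rw [Finset.union_empty, Finset.card_sdiff_of_subset (by simpa using ht), hT] at h2
      simp at h2
    have hsub : ∀ v, G.Adj z v → v ∈ T := by
      intro v hv
      rcases hs.cover v with h1 | h1 | h1
      · rw [Finset.mem_singleton] at h1; subst h1; exact absurd hv (G.loopless.irrefl _)
      · exact h1
      · exact absurd hv (hs.noAdj z (by simp) v h1)
    have := deg_le_card hsub
    have := hdeg z (hz x hx) (hz y hy)
    omega
  refine hc ⟨⟨by omega, ?_⟩, ?_⟩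
  · intro S hS
    by_contra hcon
    have hSne : Sᶜ.Nonempty := by
      rw [Set.nonempty_compl]
      rintro rfl
      rw [Set.ncard_univ, Nat.card_eq_fintype_card] at hS
      omega
    obtain ⟨A, B, hA, hB, hd, hu, hn⟩ := exists_sep_of_not_connected hSne hcon
    obtain ⟨A', T', B', hs, cA, cB, hT⟩ := lift_sep hxy hd hu hn
    have pA := (Set.ncard_pos (Set.toFinite A)).2 hA
    have pB := (Set.ncard_pos (Set.toFinite B)).2 hB
    have nA : A'.Nonempty := Finset.card_pos.1 (by omega)
    have nB : B'.Nonempty := Finset.card_pos.1 (by omega)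
    have h4 := hQ.four_le _ _ _ hs nA nB
    rcases hT with hT | ⟨hT, hx, hy⟩
    · omega
    · rcases hQ.trivial _ _ _ hs (by omega) with h1 | h1
      · exact hsingle _ _ _ hs (by omega) hx hy h1 nA nB
      · exact hsingle _ _ _ hs.symm (by omega) hx hy h1 nB nA
  · rintro S ⟨hS, A, B, hA, hB, hd, hu, hn⟩
    obtain ⟨A', T', B', hs, cA, cB, hT⟩ := lift_sep hxy hd hu hn
    rcases hT with hT | ⟨hT, hx, hy⟩
    · rcases hQ.trivial _ _ _ hs (by omega) with h1 | h1 <;> omega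
    · exact hno A' T' B' ⟨hs, by omega, by omega, by omega⟩ hx hy

/-! ### A forbidden configuration -/

set_option maxHeartbeats 4000000 in
/-- Two nonadjacent neighbours `y`, `z` of `x` with twins `u'`, `u`, such that
`N(z) ⊆ {x, u, u', s, w}`, `N(u) ⊆ {z, y, u', s, w}`, `N(y) ⊆ {x, u, u', p, q}` and
`N(u') ⊆ {u, y, z, p, q}`, leave no good separator through the edge `zu'`. -/
theorem no_good_of_twins [DecidableEq V] {G : SimpleGraph V} (hQ : QFive G) {x : V} {N : Finset V}
    (hx : Center G x N) {y z u u' p q s w : V} (hxy : G.Adj x y) (hxz : G.Adj x z)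
    (hxp : ¬ G.Adj x p) (hxq : ¬ G.Adj x q) (hxs : ¬ G.Adj x s) (hxw : ¬ G.Adj x w)
    (az : ∀ v, G.Adj z v → v = x ∨ v = u ∨ v = u' ∨ v = s ∨ v = w)
    (au : ∀ v, G.Adj u v → v = z ∨ v = y ∨ v = u' ∨ v = s ∨ v = w)
    (ay : ∀ v, G.Adj y v → v = x ∨ v = u ∨ v = u' ∨ v = p ∨ v = q)
    (au' : ∀ v, G.Adj u' v → v = u ∨ v = y ∨ v = z ∨ v = p ∨ v = q)
    (hyp : G.Adj y p) (hyq : G.Adj y q) (hyu : G.Adj y u) (hus : G.Adj u s) (huw : G.Adj u w)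
    (hzs : G.Adj z s) (hzw : G.Adj z w)
    (hpz : ¬ G.Adj z p) (hqz : ¬ G.Adj z q) (hys : ¬ G.Adj y s) (hyw : ¬ G.Adj y w)
    (hus' : ¬ G.Adj u' s) (huw' : ¬ G.Adj u' w)
    (hd : [x, y, z, u, u', p, q, s, w].Nodup)
    {A T B : Finset V} (h : Good G A T B) (hzT : z ∈ T) (huT : u' ∈ T) : False := by
  simp only [List.nodup_cons, List.mem_cons, List.not_mem_nil, not_or, or_false] at hd
  have hzN : z ∈ N := (hx.mem z).2 hxz
  have step1 : ∀ X Y, Good G X T Y → u ∉ X := by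
    intro X Y g huX
    obtain ⟨d1, d2, d3, d4, d5⟩ := g.sep
    have hyY : y ∉ Y := fun hy => d5 u huX y hy hyu.symm
    have hsY : s ∉ Y := fun hy => d5 u huX s hy hus
    have hwY : w ∉ Y := fun hy => d5 u huX w hy huw
    have hxY : x ∈ Y := by
      obtain ⟨b, hb, hzb⟩ := g.symm.exists_adj hQ hzT
      grind
    have hyX : y ∉ X := fun hy => d5 y hy x hxY hxy.symm
    have hyT : y ∈ T := by grind
    -- Exactly one vertex `r` of `{p, q}` lies in `Y`: then `Y = {x, r}` and `r` has degree
    -- at most 4.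
    have one : ∀ r r', r ∈ Y → r' ∉ Y → G.Adj y r → ¬ G.Adj z r → ¬ G.Adj x r → r ≠ x →
        (∀ v, G.Adj y v → v = x ∨ v = u ∨ v = u' ∨ v = r ∨ v = r') →
        (∀ v, G.Adj u' v → v = u ∨ v = y ∨ v = z ∨ v = r ∨ v = r') → False := by
      intro r r' hr hr' hyr hzr hxr hrx ay au'
      have hs := g.sep.symm.shift {z, y, u'} {x, r} (by grind) (by grind) (by grind)
      have hc : ((T \ {z, y, u'}) ∪ {x, r}).card ≤ 4 := by
        refine (Finset.card_union_le _ _).trans ?_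
        rw [Finset.card_sdiff_of_subset (by grind), g.card]
        have : ({z, y, u'} : Finset V).card = 3 := by rw [Finset.card_eq_three]; grind
        have := Finset.card_le_two (a := x) (b := r)
        omega
      have he := empty_of_card_le_four hQ hx hs hc
        (g.left.trans (Finset.card_le_card Finset.subset_union_left)) (by simp)
        (y := x) (by simp) (Or.inl rfl)
      rw [Finset.sdiff_eq_empty_iff_subset] at he
      have hN : ∀ v, G.Adj r v → v ∈ T.erase z := by
        intro v hv
        have hvr : v ≠ r := hv.ne'
        have hvx : v ≠ x := by rintro rfl; exact hxr hv.symm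
        have hvz : v ≠ z := by rintro rfl; exact hzr hv.symm
        rw [Finset.mem_erase]
        refine ⟨hvz, ?_⟩
        rcases d4 v with h1 | h1 | h1
        · exact absurd hv.symm (d5 v h1 r hr)
        · exact h1
        · have := he h1; grind
      have := deg_le_card hN
      rw [Finset.card_erase_of_mem hzT, g.card] at this
      have := hx.deg_two y r hxy hyr hrx
      omega
    by_cases hp : p ∈ Y
    · by_cases hq : q ∈ Y
      · -- Both `p` and `q` lie in `Y`: then `u` alone replaces `u'` and `y` in the separator.
        clear one
        have hs := g.sep.shift {u', y} {u} (by grind) (by grind) (by grind)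
        have hc : ((T \ {u', y}) ∪ {u}).card ≤ 4 := by
          refine (Finset.card_union_le _ _).trans ?_
          rw [Finset.card_sdiff_of_subset (by grind), g.card, Finset.card_pair (by grind)]
          simp
        have he := empty_of_card_le_four hQ hx hs hc
          (g.right.trans (Finset.card_le_card Finset.subset_union_left)) (by grind)
          (y := z) (by grind) (Or.inr hzN)
        rw [Finset.sdiff_eq_empty_iff_subset] at he
        have h1 := Finset.card_le_card he
        rw [Finset.card_singleton] at h1
        have h2 := g.left
        omega
      · exact one p q hp hq hyp hpz hxp (by grind) ay au'
    · by_cases hq : q ∈ Y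
      · exact one q p hq hp hyq hqz hxq (by grind) (by grind) (by grind)
      · obtain ⟨b, hb, hzb⟩ := g.symm.exists_adj hQ huT
        grind
  have step2 : u ∈ T → ∀ X Y, Good G X T Y → y ∉ X := by
    intro hu X Y g hyX
    obtain ⟨d1, d2, d3, d4, d5⟩ := g.sep
    obtain ⟨b, hb, hzb⟩ := g.symm.exists_adj hQ huT
    grind
  have huT' : u ∈ T := by
    have := h.sep.cover u
    have := step1 _ _ h
    have := step1 _ _ h.symm
    tauto
  have hyT : y ∈ T := by
    have := h.sep.cover y
    have := step2 huT' _ _ h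
    have := step2 huT' _ _ h.symm
    tauto
  -- Now `{y, z, u, u'} ⊆ T`, and the side avoiding `x` consists of one vertex of `{p, q}` and
  -- one vertex of `{s, w}`.
  have step3 : ∀ X Y, Good G X T Y → x ∉ Y → False := by
    intro X Y g hxY
    obtain ⟨d1, d2, d3, d4, d5⟩ := g.sep
    have fin : ∀ r r' t t', r ∈ Y → r' ∉ Y → t ∈ Y → t' ∉ Y → G.Adj z t → t ≠ x →
        ¬ G.Adj y t → ¬ G.Adj u' t →
        (∀ v, G.Adj y v → v = x ∨ v = u ∨ v = u' ∨ v = r ∨ v = r') →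
        (∀ v, G.Adj u' v → v = u ∨ v = y ∨ v = z ∨ v = r ∨ v = r') →
        (∀ v, G.Adj z v → v = x ∨ v = u ∨ v = u' ∨ v = t ∨ v = t') →
        (∀ v, G.Adj u v → v = z ∨ v = y ∨ v = u' ∨ v = t ∨ v = t') → False := by
      intro r r' t t' hr hr' ht ht' hzt htx hyt hut ay au' az au
      have hs := g.sep.symm.shift {z, y, u', u} {r, t} (by grind) (by grind) (by grind)
      have hc : ((T \ {z, y, u', u}) ∪ {r, t}).card ≤ 3 := by
        refine (Finset.card_union_le _ _).trans ?_
        rw [Finset.card_sdiff_of_subset (by grind), g.card]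
        have : ({z, y, u', u} : Finset V).card = 4 := by
          rw [Finset.card_insert_of_notMem (by grind)]
          have : ({y, u', u} : Finset V).card = 3 := by rw [Finset.card_eq_three]; grind
          omega
        have := Finset.card_le_two (a := r) (b := t)
        omega
      have he : Y \ {r, t} = ∅ := by
        by_contra hne
        have := hQ.four_le _ _ _ hs (Finset.nonempty_iff_ne_empty.2 hne) ⟨z, by simp⟩
        omega
      rw [Finset.sdiff_eq_empty_iff_subset] at he
      have hN : ∀ v, G.Adj t v → v ∈ insert r (T \ {y, u'}) := by
        intro v hv
        have hvt : v ≠ t := hv.ne'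
        have hvy : v ≠ y := by rintro rfl; exact hyt hv.symm
        have hvu : v ≠ u' := by rintro rfl; exact hut hv.symm
        rcases d4 v with h1 | h1 | h1
        · exact absurd hv.symm (d5 v h1 t ht)
        · grind
        · have := he h1; grind
      have := deg_le_card hN
      have := Finset.card_insert_le r (T \ {y, u'})
      rw [Finset.card_sdiff_of_subset (by grind), g.card, Finset.card_pair (by grind)] at this
      have := hx.deg_two z t hxz hzt htx
      omega
    obtain ⟨a, ha, hua⟩ := g.exists_adj hQ huT'
    obtain ⟨b, hb, hub⟩ := g.symm.exists_adj hQ huT'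
    obtain ⟨a', ha', hua'⟩ := g.exists_adj hQ huT
    obtain ⟨b', hb', hub'⟩ := g.symm.exists_adj hQ huT
    have e1 : (s ∈ Y ∧ w ∉ Y) ∨ (w ∈ Y ∧ s ∉ Y) := by
      have := au a hua
      have := au b hub
      grind
    have e2 : (p ∈ Y ∧ q ∉ Y) ∨ (q ∈ Y ∧ p ∉ Y) := by
      have := au' a' hua'
      have := au' b' hub'
      grind
    rcases e1 with ⟨e1, e1'⟩ | ⟨e1, e1'⟩ <;> rcases e2 with ⟨e2, e2'⟩ | ⟨e2, e2'⟩
    · exact fin p q s w e2 e2' e1 e1' hzs (by grind) hys hus' ay au' az au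
    · exact fin q p s w e2 e2' e1 e1' hzs (by grind) hys hus' (by grind) (by grind) az au
    · exact fin p q w s e2 e2' e1 e1' hzw (by grind) hyw huw' ay au' (by grind) (by grind)
    · exact fin q p w s e2 e2' e1 e1' hzw (by grind) hyw huw' (by grind) (by grind) (by grind)
        (by grind)
  by_cases hxB : x ∈ B
  · exact step3 B A h.symm fun hxA => h.sep.disjAB x hxA hxB
  · exact step3 A B h hxB

/-! ### The neighbourhood of a vertex of degree 4 -/

/-- The graph induced on `N` is a perfect matching. -/
def Matched (G : SimpleGraph V) (N : Finset V) : Prop :=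
  ∀ y ∈ N, ∃ z ∈ N, G.Adj y z ∧ ∀ w ∈ N, (G.Adj y w → w = z) ∧ (G.Adj z w → w = y)

/-- Every edge whose ends have only common neighbours of degree at least 5 lies in a good
separator. -/
def Covered (G : SimpleGraph V) : Prop :=
  ∀ a b, G.Adj a b → (∀ z, G.Adj z a → G.Adj z b → 5 ≤ (G.neighborSet z).ncard) →
    ∃ A T B : Finset V, Good G A T B ∧ a ∈ T ∧ b ∈ T

theorem Covered.at_center {G : SimpleGraph V} (hg : Covered G) {x : V} {N : Finset V}
    (hx : Center G x N) {y : V} (hy : y ∈ N) :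
    ∃ A T B : Finset V, Good G A T B ∧ x ∈ T ∧ y ∈ T :=
  hg x y ((hx.mem y).1 hy) fun z hzx _ => hx.deg_one z hzx.symm

/-- If a good separator `T` through `x` cuts off just two vertices `a`, `u` with `u` not adjacent
to `x`, then `u` is adjacent to `a` and to all of `T` except `x`: otherwise `u` would be cut off by
four of these five vertices, one of which is `a` or the neighbour `b` of `x` in `T`. -/
theorem Good.adj_of_pair [DecidableEq V] {G : SimpleGraph V} (hQ : QFive G) {x : V}
    {N : Finset V} (hx : Center G x N) {a u b : V} {T B : Finset V} (h : Good G {a, u} T B)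
    (hxT : x ∈ T) (hxu : ¬ G.Adj x u) (hau : a ≠ u) (haN : a ∈ N) (hbN : b ∈ N) (hbT : b ∈ T) :
    ∀ t ∈ insert a (T.erase x), G.Adj u t := by
  intro t ht
  by_contra hut
  have haT : a ∉ T := h.sep.disjAT a (by simp)
  have huT : u ∉ T := h.sep.disjAT u (by simp)
  have hbx : b ≠ x := by rintro rfl; exact G.loopless.irrefl _ ((hx.mem b).1 hbN)
  have h1 := h.sep.shift {x} {a} (by simpa using hxT) (by simp) (by
    intro m hm v hv hmv
    simp only [Finset.mem_singleton, Finset.mem_insert] at hm hv ⊢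
    subst hm
    rcases hv with rfl | rfl
    · rfl
    · exact absurd hmv hxu)
  have h2 := h1.shift {t} ∅ (by
    intro v hv
    simp only [Finset.mem_singleton] at hv
    subst hv
    simp only [Finset.mem_insert, Finset.mem_erase] at ht
    simp only [Finset.mem_union, Finset.mem_sdiff, Finset.mem_singleton]
    tauto) (by simp) (by
    intro m hm v hv hmv
    simp only [Finset.mem_singleton, Finset.mem_insert, Finset.mem_sdiff] at hm hv
    subst hm
    rcases hv with ⟨rfl | rfl, hv⟩
    · exact absurd rfl hv
    · exact absurd hmv.symm hut)
  have hc : (((T \ {x}) ∪ {a}) \ {t} ∪ ∅).card ≤ 4 := by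
    have e : ((T \ {x}) ∪ {a}) \ {t} ∪ ∅ = (insert a (T.erase x)).erase t := by
      ext v; simp; tauto
    rw [e, Finset.card_erase_of_mem ht, Finset.card_insert_of_notMem (by simp [haT]),
      Finset.card_erase_of_mem hxT, h.card]
  have hD : 2 ≤ (B ∪ {x} ∪ {t}).card := h.right.trans (Finset.card_le_card (by
    intro v hv; simp [hv]))
  have hxC : x ∉ (({a, u} : Finset V) \ {a}) \ ∅ := by
    intro hxC
    exact h.sep.disjAT x (by simp at hxC ⊢; tauto) hxT
  have hem : (({a, u} : Finset V) \ {a}) \ ∅ = ∅ := by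
    by_cases hta : t = a
    · exact empty_of_card_le_four hQ hx h2 hc hD hxC (y := b) (by
        have : b ≠ a := by rintro rfl; exact haT hbT
        simp [hbT, hbx, hta, this]) (Or.inr hbN)
    · exact empty_of_card_le_four hQ hx h2 hc hD hxC (y := a) (by
        simp [Ne.symm hta]) (Or.inr haN)
  have : u ∈ (({a, u} : Finset V) \ {a}) \ ∅ := by simp [hau.symm]
  rw [hem] at this
  simp at this

theorem exists_eq_pair [DecidableEq V] {A : Finset V} (hA : A.card = 2) {a : V} (ha : a ∈ A) :
    ∃ u, a ≠ u ∧ A = {a, u} := by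
  obtain ⟨b, c, hbc, rfl⟩ := Finset.card_eq_two.1 hA
  simp only [Finset.mem_insert, Finset.mem_singleton] at ha
  rcases ha with rfl | rfl
  · exact ⟨c, hbc, rfl⟩
  · exact ⟨b, hbc.symm, Finset.pair_comm _ _⟩

theorem matched_of_pairs [DecidableEq V] {G : SimpleGraph V} {N : Finset V} (a b c d : V)
    (hN : N = {a, b, c, d}) (hab : G.Adj a b) (hcd : G.Adj c d) (hac : ¬ G.Adj a c)
    (had : ¬ G.Adj a d) (hbc : ¬ G.Adj b c) (hbd : ¬ G.Adj b d) : Matched G N := by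
  intro y hy
  have hba := hab.symm
  have hdc := hcd.symm
  have hca : ¬ G.Adj c a := fun hh => hac hh.symm
  have hda : ¬ G.Adj d a := fun hh => had hh.symm
  have hcb : ¬ G.Adj c b := fun hh => hbc hh.symm
  have hdb : ¬ G.Adj d b := fun hh => hbd hh.symm
  subst hN
  simp only [Finset.mem_insert, Finset.mem_singleton] at hy
  rcases hy with rfl | rfl | rfl | rfl
  · exact ⟨b, by simp, hab, by simp [*]⟩
  · exact ⟨a, by simp, hba, by simp [*]⟩
  · exact ⟨d, by simp, hcd, by simp [*]⟩
  · exact ⟨c, by simp, hdc, by simp [*]⟩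

/-! ### A good separator containing two neighbours of `x` -/

theorem two_le_of_mem {Y : Finset V} (hY : 2 ≤ Y.card) (c : V) (hc : ∀ w ∈ Y, w = c) :
    False := by
  have : Y.card ≤ 1 := Finset.card_le_one.2 fun a ha b hb => (hc a ha).trans (hc b hb).symm
  omega

/-- A bipartite graph on `{x₁, x₄}` and `{x₂, x₃}` without isolated vertices that splits into two
parts of at least two vertices each is a perfect matching. -/
theorem matched_of_split [DecidableEq V] {G : SimpleGraph V} {N : Finset V} {x₁ x₂ x₃ x₄ : V}
    (hN : N = {x₁, x₂, x₃, x₄}) (n14 : ¬ G.Adj x₁ x₄) (n23 : ¬ G.Adj x₂ x₃)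
    (e1 : G.Adj x₁ x₂ ∨ G.Adj x₁ x₃) (e2 : G.Adj x₁ x₂ ∨ G.Adj x₄ x₂)
    (e3 : G.Adj x₁ x₃ ∨ G.Adj x₄ x₃) {X S Y : Finset V} (hout : ∀ w ∈ N, w ∉ S)
    (hin : ∀ w, w ∉ S → w ∈ N) (g : Good G X S Y) (h1 : x₁ ∈ X) : Matched G N := by
  obtain ⟨d1, d2, d3, d4, d5⟩ := g.sep
  have inY : ∀ w ∈ Y, w = x₂ ∨ w = x₃ ∨ w = x₄ := by
    intro w hw
    have := hin w fun hS => d3 w hS hw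
    rw [hN] at this
    simp only [Finset.mem_insert, Finset.mem_singleton] at this
    rcases this with rfl | h
    · exact absurd hw (d2 _ h1)
    · exact h
  have inX : ∀ w ∈ N, w ∉ Y → w ∈ X := by
    intro w hw hwY
    rcases d4 w with h | h | h
    · exact h
    · exact absurd h (hout w hw)
    · exact absurd h hwY
  -- If one of `x₂`, `x₃` is outside `Y`, then `Y` consists of the other one and `x₄`.
  have yy : ∀ a b, a ∉ Y → (∀ w ∈ Y, w = a ∨ w = b ∨ w = x₄) → b ∈ Y ∧ x₄ ∈ Y := by
    intro a b ha hY
    constructor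
    · by_contra hb
      refine two_le_of_mem g.right x₄ fun w hw => ?_
      rcases hY w hw with rfl | rfl | rfl
      · exact absurd hw ha
      · exact absurd hw hb
      · rfl
    · by_contra hb
      refine two_le_of_mem g.right b fun w hw => ?_
      rcases hY w hw with rfl | rfl | rfl
      · exact absurd hw ha
      · rfl
      · exact absurd hw hb
  rcases e1 with e1 | e1
  · have h2 : x₂ ∉ Y := fun hh => d5 _ h1 _ hh e1
    obtain ⟨h3, h4⟩ := yy x₂ x₃ h2 inY
    have h2' : x₂ ∈ X := inX _ (by simp [hN]) h2
    have q1 := d5 _ h1 _ h3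
    have q2 := d5 _ h2' _ h4
    exact matched_of_pairs x₁ x₂ x₃ x₄ hN e1 (e3.resolve_left q1).symm q1 n14 n23 q2
  · have h2 : x₃ ∉ Y := fun hh => d5 _ h1 _ hh e1
    obtain ⟨h3, h4⟩ := yy x₃ x₂ h2 fun w hw => by have := inY w hw; tauto
    have h2' : x₃ ∈ X := inX _ (by simp [hN]) h2
    have q1 := d5 _ h1 _ h3
    have q2 := d5 _ h2' _ h4
    exact matched_of_pairs x₁ x₃ x₂ x₄ (by rw [hN]; ext; simp; tauto) e1
      (e2.resolve_left q1).symm q1 n14 (fun hh => n23 hh.symm) q2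

set_option maxHeartbeats 4000000 in
/-- The extremal configuration on nine vertices, in which both sides of two crossing good
separators have two vertices. -/
theorem matched_of_nine [DecidableEq V] {G : SimpleGraph V} (hQ : QFive G) (hg : Covered G)
    {x : V} {N : Finset V} (hx : Center G x N) {x₁ x₂ x₃ x₄ u v p q : V}
    (hN : N = {x₁, x₂, x₃, x₄}) (hd : [x, x₁, x₂, x₃, x₄, u, v, p, q].Nodup)
    (h : Good G {x₂, u} {x, x₁, p, x₄, q} {x₃, v})
    (h' : Good G {x₁, p} {x, x₂, u, x₃, v} {x₄, q}) : Matched G N := by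
  simp only [List.nodup_cons, List.mem_cons, List.not_mem_nil, not_or, or_false] at hd
  have hxN : ∀ w, G.Adj x w ↔ w = x₁ ∨ w = x₂ ∨ w = x₃ ∨ w = x₄ := by
    intro w; rw [← hx.mem, hN]; simp
  have m1 : x₁ ∈ N := by simp [hN]
  have m2 : x₂ ∈ N := by simp [hN]
  have m3 : x₃ ∈ N := by simp [hN]
  have m4 : x₄ ∈ N := by simp [hN]
  have nu : ¬ G.Adj x u := by rw [hxN]; grind
  have nv : ¬ G.Adj x v := by rw [hxN]; grind
  have np : ¬ G.Adj x p := by rw [hxN]; grind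
  have nq : ¬ G.Adj x q := by rw [hxN]; grind
  have au := h.adj_of_pair hQ hx (by simp) nu (by grind) m2 m1 (by simp)
  have av := h.symm.adj_of_pair hQ hx (by simp) nv (by grind) m3 m1 (by simp)
  have ap := h'.adj_of_pair hQ hx (by simp) np (by grind) m1 m2 (by simp)
  have aq := h'.symm.adj_of_pair hQ hx (by simp) nq (by grind) m4 m2 (by simp)
  have cov : ∀ w, w = x ∨ w = x₁ ∨ w = x₂ ∨ w = x₃ ∨ w = x₄ ∨ w = u ∨ w = v ∨ w = p ∨ w = q := by
    intro w
    have := h.sep.cover w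
    simp only [Finset.mem_insert, Finset.mem_singleton] at this
    tauto
  have no := h.sep.noAdj
  have no' := h'.sep.noAdj
  simp only [Finset.mem_insert, Finset.mem_singleton, forall_eq_or_imp, forall_eq] at no no'
  obtain ⟨⟨n23, n2v⟩, nu3, nuv⟩ := no
  obtain ⟨⟨n14, n1q⟩, np4, npq⟩ := no'
  have au1 : G.Adj u x₁ := au _ (by grind)
  have au2 : G.Adj u x₂ := au _ (by grind)
  have au4 : G.Adj u x₄ := au _ (by grind)
  have aup : G.Adj u p := au _ (by grind)
  have auq : G.Adj u q := au _ (by grind)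
  have av1 : G.Adj v x₁ := av _ (by grind)
  have av3 : G.Adj v x₃ := av _ (by grind)
  have av4 : G.Adj v x₄ := av _ (by grind)
  have avp : G.Adj v p := av _ (by grind)
  have avq : G.Adj v q := av _ (by grind)
  have ap1 : G.Adj p x₁ := ap _ (by grind)
  have ap2 : G.Adj p x₂ := ap _ (by grind)
  have ap3 : G.Adj p x₃ := ap _ (by grind)
  have aq4 : G.Adj q x₄ := aq _ (by grind)
  have aq2 : G.Adj q x₂ := aq _ (by grind)
  have aq3 : G.Adj q x₃ := aq _ (by grind)
  clear au av ap aq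
  -- Each neighbour of `x` has degree at least 5, hence a neighbour in `N`.
  have deg : ∀ a ∈ N, ∀ c d e, (∀ w, G.Adj a w → w = x ∨ w = c ∨ w = d ∨ w = e) → False := by
    intro a ha c d e hw
    have h1 := deg_le_card (S := {x, c, d, e}) (by simpa using hw)
    have h2 := hx.deg_one a ((hx.mem a).1 ha)
    have := Finset.card_le_four (a := x) (b := c) (c := d) (d := e)
    omega
  have irr : ∀ w, ¬ G.Adj w w := fun w => G.loopless.irrefl w
  have e1 : G.Adj x₁ x₂ ∨ G.Adj x₁ x₃ := by
    by_contra! hn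
    refine deg x₁ m1 u v p fun w hw => ?_
    rcases cov w with rfl | rfl | rfl | rfl | rfl | rfl | rfl | rfl | rfl <;>
      first
      | simp
      | exact absurd hw (irr _)
      | exact absurd hw hn.1
      | exact absurd hw hn.2
      | exact absurd hw n14
      | exact absurd hw n1q
  have e4 : G.Adj x₄ x₂ ∨ G.Adj x₄ x₃ := by
    by_contra! hn
    refine deg x₄ m4 u v q fun w hw => ?_
    rcases cov w with rfl | rfl | rfl | rfl | rfl | rfl | rfl | rfl | rfl <;>
      first
      | simp
      | exact absurd hw (irr _)
      | exact absurd hw hn.1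
      | exact absurd hw hn.2
      | exact absurd hw.symm n14
      | exact absurd hw.symm np4
  have e2 : G.Adj x₁ x₂ ∨ G.Adj x₄ x₂ := by
    by_contra! hn
    refine deg x₂ m2 u p q fun w hw => ?_
    rcases cov w with rfl | rfl | rfl | rfl | rfl | rfl | rfl | rfl | rfl <;>
      first
      | simp
      | exact absurd hw (irr _)
      | exact absurd hw.symm hn.1
      | exact absurd hw.symm hn.2
      | exact absurd hw n23
      | exact absurd hw n2v
  have e3 : G.Adj x₁ x₃ ∨ G.Adj x₄ x₃ := by
    by_contra! hn
    refine deg x₃ m3 v p q fun w hw => ?_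
    rcases cov w with rfl | rfl | rfl | rfl | rfl | rfl | rfl | rfl | rfl <;>
      first
      | simp
      | exact absurd hw (irr _)
      | exact absurd hw.symm hn.1
      | exact absurd hw.symm hn.2
      | exact absurd hw.symm n23
      | exact absurd hw.symm nu3
  -- A good separator through the edge `up` must be `{u, p, x, v, q}`.
  obtain ⟨X₀, S, Y₀, g₀, huS, hpS⟩ := hg u p aup (by
    intro c hcu hcp
    rcases cov c with rfl | rfl | rfl | rfl | rfl | rfl | rfl | rfl | rfl
    · exact absurd hcu nu
    · exact hx.deg_one _ ((hx.mem _).1 m1)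
    · exact hx.deg_one _ ((hx.mem _).1 m2)
    · exact hx.deg_one _ ((hx.mem _).1 m3)
    · exact hx.deg_one _ ((hx.mem _).1 m4)
    · exact absurd hcu (irr _)
    · exact absurd hcu.symm nuv
    · exact absurd hcp (irr _)
    · exact absurd hcp.symm npq)
  have a1 : G.Adj x x₁ := (hx.mem _).1 m1
  have a2 : G.Adj x x₂ := (hx.mem _).1 m2
  have a3 : G.Adj x x₃ := (hx.mem _).1 m3
  have a4 : G.Adj x x₄ := (hx.mem _).1 m4
  have far : ∀ X Y, Good G X S Y → ∀ a b, a ∈ X → G.Adj a b → b ∉ Y :=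
    fun X Y g a b ha hab hb => g.sep.noAdj a ha b hb hab
  have sx : ∀ X Y, Good G X S Y → x ∉ X := by
    intro X Y g hxX
    have f := far X Y g x
    have f' := far Y X g.symm
    have hu : u ∉ Y := g.sep.disjTB u huS
    have hp : p ∉ Y := g.sep.disjTB p hpS
    have hu' : u ∉ X := fun hh => g.sep.disjAT u hh huS
    have hp' : p ∉ X := fun hh => g.sep.disjAT p hh hpS
    have b1 := f _ hxX a1
    have b2 := f _ hxX a2
    have b3 := f _ hxX a3
    have b4 := f _ hxX a4
    have hxY : x ∉ Y := g.sep.disjAB x hxX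
    have hv : v ∈ Y := by
      by_contra hv
      refine two_le_of_mem g.right q fun w hw => ?_
      rcases cov w with rfl | rfl | rfl | rfl | rfl | rfl | rfl | rfl | rfl <;>
      first | rfl | exact absurd hw (by assumption)
    have hq : q ∈ Y := by
      by_contra hv
      refine two_le_of_mem g.right v fun w hw => ?_
      rcases cov w with rfl | rfl | rfl | rfl | rfl | rfl | rfl | rfl | rfl <;>
      first | rfl | exact absurd hw (by assumption)
    have c1 := f' _ _ hv av1
    have c3 := f' _ _ hv av3
    have c4 := f' _ _ hv av4
    have c2 := f' _ _ hq aq2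
    have hv' : v ∉ X := fun hh => g.sep.disjAB v hh hv
    have hq' : q ∉ X := fun hh => g.sep.disjAB q hh hq
    refine two_le_of_mem g.left x fun w hw => ?_
    rcases cov w with rfl | rfl | rfl | rfl | rfl | rfl | rfl | rfl | rfl <;>
      first | rfl | exact absurd hw (by assumption)
  have hxS : x ∈ S := by
    exact ((g₀.sep.cover x).resolve_left (sx _ _ g₀)).resolve_right (sx _ _ g₀.symm)
  have sv : ∀ X Y, Good G X S Y → v ∉ X := by
    intro X Y g hvX
    have f := far X Y g v
    have hu : u ∉ Y := g.sep.disjTB u huS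
    have hp : p ∉ Y := g.sep.disjTB p hpS
    have hx' : x ∉ Y := g.sep.disjTB x hxS
    have hv : v ∉ Y := g.sep.disjAB v hvX
    have b1 := f _ hvX av1
    have b3 := f _ hvX av3
    have b4 := f _ hvX av4
    have b5 := f _ hvX avq
    refine two_le_of_mem g.right x₂ fun w hw => ?_
    rcases cov w with rfl | rfl | rfl | rfl | rfl | rfl | rfl | rfl | rfl <;>
      first | rfl | exact absurd hw (by assumption)
  have sq : ∀ X Y, Good G X S Y → q ∉ X := by
    intro X Y g hqX
    have f := far X Y g q
    have hu : u ∉ Y := g.sep.disjTB u huS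
    have hp : p ∉ Y := g.sep.disjTB p hpS
    have hx' : x ∉ Y := g.sep.disjTB x hxS
    have hq : q ∉ Y := g.sep.disjAB q hqX
    have b2 := f _ hqX aq2
    have b3 := f _ hqX aq3
    have b4 := f _ hqX aq4
    have b5 := f _ hqX avq.symm
    refine two_le_of_mem g.right x₁ fun w hw => ?_
    rcases cov w with rfl | rfl | rfl | rfl | rfl | rfl | rfl | rfl | rfl <;>
      first | rfl | exact absurd hw (by assumption)
  have hSeq : S = {x, u, v, p, q} := by
    symm
    apply Finset.eq_of_subset_of_card_le
    · have hvS : v ∈ S := by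
        exact ((g₀.sep.cover v).resolve_left (sv _ _ g₀)).resolve_right (sv _ _ g₀.symm)
      have hqS : q ∈ S := by
        exact ((g₀.sep.cover q).resolve_left (sq _ _ g₀)).resolve_right (sq _ _ g₀.symm)
      intro w hw
      simp only [Finset.mem_insert, Finset.mem_singleton] at hw
      rcases hw with rfl | rfl | rfl | rfl | rfl <;> assumption
    · rw [g₀.card]
      have : [x, u, v, p, q].Nodup := by simp; clear * - hd; grind
      have := List.toFinset_card_of_nodup this
      simp at this
      omega
  have hout : ∀ w ∈ N, w ∉ S := by
    rw [hSeq, hN]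
    simp only [Finset.mem_insert, Finset.mem_singleton]
    clear * - hd
    grind
  have hin : ∀ w, w ∉ S → w ∈ N := by
    rw [hSeq, hN]
    simp only [Finset.mem_insert, Finset.mem_singleton]
    clear * - cov
    intro w
    rcases cov w with h | h | h | h | h | h | h | h | h <;> simp [h]
  rcases g₀.sep.cover x₁ with h1 | h1 | h1
  · exact matched_of_split hN n14 n23 e1 e2 e3 hout hin g₀ h1
  · exact absurd h1 (hout _ m1)
  · exact matched_of_split hN n14 n23 e1 e2 e3 hout hin g₀.symm h1

/-- If a good separator through `x` contains two neighbours of `x`, the graph has nine vertices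
and is as in `matched_of_nine`. -/
theorem matched_of_two [DecidableEq V] {G : SimpleGraph V} (hQ : QFive G) (hg : Covered G)
    {x : V} {N : Finset V} (hx : Center G x N) {A T B : Finset V} (h : Good G A T B)
    (hxT : x ∈ T) {x₁ x₄ : V} (h14 : x₁ ≠ x₄) (m1 : x₁ ∈ N) (m4 : x₄ ∈ N) (t1 : x₁ ∈ T)
    (t4 : x₄ ∈ T) : Matched G N := by
  obtain ⟨x₂, k2, a2⟩ := h.exists_adj hQ hxT
  obtain ⟨x₃, k3, a3⟩ := h.symm.exists_adj hQ hxT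
  have m2 := (hx.mem x₂).2 a2
  have m3 := (hx.mem x₃).2 a3
  have ne : ∀ S : Finset V, ∀ a b, a ∈ S → b ∉ S → a ≠ b := by
    rintro S a b ha hb rfl; exact hb ha
  have t2 := h.sep.disjAT _ k2
  have t3 : x₃ ∉ T := fun hh => h.sep.disjTB _ hh k3
  have n12 := ne T _ _ t1 t2
  have n13 := ne T _ _ t1 t3
  have n42 := ne T _ _ t4 t2
  have n43 := ne T _ _ t4 t3
  have n23 := ne A _ _ k2 fun hh => h.sep.disjAB _ hh k3
  have hN : N = {x₁, x₂, x₃, x₄} := by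
    symm
    apply Finset.eq_of_subset_of_card_le
    · intro w hw
      simp only [Finset.mem_insert, Finset.mem_singleton] at hw
      rcases hw with rfl | rfl | rfl | rfl <;> assumption
    · have : [x₁, x₂, x₃, x₄].Nodup := by simp [n12, n13, h14, n23, n42.symm, n43.symm]
      have := List.toFinset_card_of_nodup this
      rw [hx.card]
      simp at this
      omega
  have inN : ∀ w ∈ N, w = x₁ ∨ w = x₂ ∨ w = x₃ ∨ w = x₄ := by
    intro w hw; rw [hN] at hw; simpa using hw
  obtain ⟨A', T', B', h', hxT', t2'⟩ := hg.at_center hx m2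
  obtain ⟨A'', T'', B'', h'', hxT'', t3''⟩ := hg.at_center hx m3
  obtain ⟨c1, c2, c3, c4, c5, c6⟩ := h.cross hQ hx h' hxT hxT' t2' k2 m2 (by
    intro w hw hwN
    rcases inN w hwN with rfl | rfl | rfl | rfl
    · exact absurd t1 (h.sep.disjAT _ hw)
    · rfl
    · exact absurd k3 (h.sep.disjAB _ hw)
    · exact absurd t4 (h.sep.disjAT _ hw))
  obtain ⟨-, c2', -, -, -, -⟩ := h.symm.cross hQ hx h'' hxT hxT'' t3'' k3 m3 (by
    intro w hw hwN
    rcases inN w hwN with rfl | rfl | rfl | rfl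
    · exact absurd hw (h.sep.disjTB _ t1)
    · exact absurd hw (h.sep.disjAB _ k2)
    · rfl
    · exact absurd hw (h.sep.disjTB _ t4))
  have hBT : B ⊆ T' := by
    rw [← Finset.inter_eq_left]
    exact Finset.eq_of_subset_of_card_le Finset.inter_subset_left (by omega)
  have hA'T : T ∩ A' = A' := by
    rw [Finset.inter_eq_right]
    intro w hw
    have := h'.sep.disjAT w hw
    rcases h.sep.cover w with hh | hh | hh
    · exact absurd (c1 hh) this
    · exact hh
    · exact absurd (hBT hh) this
  have hB'T : T ∩ B' = B' := by
    rw [Finset.inter_eq_right]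
    intro w hw
    have : w ∉ T' := fun hh => h'.sep.disjTB w hh hw
    rcases h.sep.cover w with hh | hh | hh
    · exact absurd (c1 hh) this
    · exact hh
    · exact absurd (hBT hh) this
  rw [hA'T] at c4
  rw [hB'T] at c5
  obtain ⟨u, e2u, rfl⟩ := exists_eq_pair c2 k2
  obtain ⟨v, e3v, rfl⟩ := exists_eq_pair c2' k3
  -- The statement is symmetric under exchanging `x₁` and `x₄`.
  have fin : ∀ y z A' B', Good G A' T' B' → N = {y, x₂, x₃, z} → y ∈ A' → z ∈ B' →
      A' ⊆ T → B' ⊆ T → A'.card = 2 → B'.card = 2 → Matched G N := by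
    intro y z A' B' h' hN hy hz hA'T hB'T c4 c5
    obtain ⟨p, eyp, rfl⟩ := exists_eq_pair c4 hy
    obtain ⟨q, ezq, rfl⟩ := exists_eq_pair c5 hz
    obtain ⟨d1, d2, d3, d4, d5⟩ := h.sep
    obtain ⟨d1', d2', d3', d4', d5'⟩ := h'.sep
    have hd : [x, y, x₂, x₃, z, u, v, p, q].Nodup := by
      clear * - hxT hxT' d1 d2 d3 d1' d2' d3' e2u e3v eyp ezq hA'T hB'T
      have f3 : x₃ ∉ T := fun hh => d3 _ hh (by simp)
      have fv : v ∉ T := fun hh => d3 _ hh (by simp)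
      have fz : z ∉ T' := fun hh => d3' _ hh (by simp)
      have fq : q ∉ T' := fun hh => d3' _ hh (by simp)
      clear d3 d3'
      simp only [Finset.mem_insert, Finset.mem_singleton, forall_eq_or_imp, forall_eq, not_or,
        Finset.insert_subset_iff, Finset.singleton_subset_iff] at *
      simp only [List.nodup_cons, List.mem_cons, List.not_mem_nil, not_or, or_false,
        List.nodup_nil, not_false_eq_true, and_true]
      and_intros <;> grind
    have hT : T = {x, y, p, z, q} := by
      symm
      apply Finset.eq_of_subset_of_card_le
      · clear * - hA'T hB'T hxT
        grind
      · have : [x, y, p, z, q].Nodup := by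
          clear * - hd
          grind
        have := List.toFinset_card_of_nodup this
        rw [h.card]
        simp at this
        omega
    have hT' : T' = {x, x₂, u, x₃, v} := by
      symm
      apply Finset.eq_of_subset_of_card_le
      · clear * - c1 hBT hxT'
        grind
      · have : [x, x₂, u, x₃, v].Nodup := by
          clear * - hd
          grind
        have := List.toFinset_card_of_nodup this
        rw [h'.card]
        simp at this
        omega
    rw [hT] at h
    rw [hT'] at h'
    exact matched_of_nine hQ hg hx hN hd h h'
  obtain ⟨y, ky, ay⟩ := h'.exists_adj hQ hxT'
  obtain ⟨z, kz, az⟩ := h'.symm.exists_adj hQ hxT'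
  have my := inN y ((hx.mem y).2 ay)
  have mz := inN z ((hx.mem z).2 az)
  have nyz : y ≠ z := by rintro rfl; exact h'.sep.disjAB _ ky kz
  have t3' : x₃ ∈ T' := hBT k3
  have py : y = x₁ ∨ y = x₄ := by
    rcases my with rfl | rfl | rfl | rfl
    · simp
    · exact absurd t2' (h'.sep.disjAT _ ky)
    · exact absurd t3' (h'.sep.disjAT _ ky)
    · simp
  have pz : z = x₁ ∨ z = x₄ := by
    rcases mz with rfl | rfl | rfl | rfl
    · simp
    · exact absurd kz (h'.sep.disjTB _ t2')
    · exact absurd kz (h'.sep.disjTB _ t3')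
    · simp
  refine fin y z A' B' h' ?_ ky kz (Finset.inter_eq_right.1 hA'T) (Finset.inter_eq_right.1 hB'T)
    c4 c5
  rcases py with rfl | rfl <;> rcases pz with rfl | rfl
  · exact absurd rfl nyz
  · exact hN
  · rw [hN]; ext; simp; tauto
  · exact absurd rfl nyz

/-! ### Good separators containing a single neighbour of `x` -/

/-- Of the three neighbours of `x` outside the separator, one is alone on its side. -/
theorem exists_single [DecidableEq V] {G : SimpleGraph V} (hQ : QFive G) (hg : Covered G)
    {x : V} {N : Finset V} (hx : Center G x N)
    (hone : ∀ A T B, Good G A T B → x ∈ T → ∀ a ∈ N, ∀ b ∈ N, a ∈ T → b ∈ T → a = b)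
    {y : V} (hy : y ∈ N) :
    ∃ A T B z, Good G A T B ∧ x ∈ T ∧ y ∈ T ∧ z ∈ A ∧ z ∈ N ∧ ∀ v ∈ A, v ∈ N → v = z := by
  obtain ⟨A, T, B, h, hxT, hyT⟩ := hg.at_center hx hy
  have hc := h.sep.cards N
  have hT : (T ∩ N).card ≤ 1 := Finset.card_le_one.2 fun a ha b hb => by
    rw [Finset.mem_inter] at ha hb
    exact hone A T B h hxT a ha.2 b hb.2 ha.1 hb.1
  have pos : ∀ X Y, Good G X T Y → 1 ≤ (X ∩ N).card := by
    intro X Y g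
    obtain ⟨a, ha, hxa⟩ := g.exists_adj hQ hxT
    exact Finset.card_pos.2 ⟨a, Finset.mem_inter.2 ⟨ha, (hx.mem a).2 hxa⟩⟩
  have hA := pos A B h
  have hB := pos B A h.symm
  have hT' : 1 ≤ (T ∩ N).card := Finset.card_pos.2 ⟨y, Finset.mem_inter.2 ⟨hyT, hy⟩⟩
  have hN := hx.card
  have fin : ∀ X Y, Good G X T Y → (X ∩ N).card = 1 →
      ∃ A T B z, Good G A T B ∧ x ∈ T ∧ y ∈ T ∧ z ∈ A ∧ z ∈ N ∧ ∀ v ∈ A, v ∈ N → v = z := by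
    intro X Y g hc
    obtain ⟨z, hz⟩ := Finset.card_eq_one.1 hc
    have hz' : z ∈ X ∩ N := by rw [hz]; simp
    rw [Finset.mem_inter] at hz'
    refine ⟨X, T, Y, z, g, hxT, hyT, hz'.1, hz'.2, fun v hv hvN => ?_⟩
    have : v ∈ X ∩ N := Finset.mem_inter.2 ⟨hv, hvN⟩
    rw [hz] at this
    simpa using this
  rcases (by omega : (A ∩ N).card = 1 ∨ (B ∩ N).card = 1) with h1 | h1
  · exact fin A B h h1
  · exact fin B A h.symm h1

theorem adj_of_five [DecidableEq V] {G : SimpleGraph V} {a b c d e f : V}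
    (h : ∀ v, G.Adj a v → v = b ∨ v = c ∨ v = d ∨ v = e ∨ v = f)
    (hd : 5 ≤ (G.neighborSet a).ncard) :
    G.Adj a b ∧ G.Adj a c ∧ G.Adj a d ∧ G.Adj a e ∧ G.Adj a f := by
  have := adj_of_card_le (S := {b, c, d, e, f}) (by simpa using h) (Finset.card_le_five.trans hd)
  simpa using this

/-- The relation between `y` and `z` that some good separator through `x` and `y`
has `z` as the only vertex of `N` on one side is symmetric, and vertices
related in this way are matched in `N`. -/
theorem matched_of_one [DecidableEq V] {G : SimpleGraph V} (hQ : QFive G) (hg : Covered G)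
    {x : V} {N : Finset V} (hx : Center G x N)
    (hone : ∀ A T B, Good G A T B → x ∈ T → ∀ a ∈ N, ∀ b ∈ N, a ∈ T → b ∈ T → a = b) :
    Matched G N := by
  intro y hyN
  obtain ⟨A, T, B, z, h, hxT, hyT, hzA, hzN, huz⟩ := exists_single hQ hg hx hone hyN
  obtain ⟨A', T', B', w, h', hxT', hzT', hwA', hwN, huw⟩ := exists_single hQ hg hx hone hzN
  obtain ⟨A'', T'', B'', h'', hxT'', hwT''⟩ := hg.at_center hx hwN
  obtain ⟨hAT', cA, hTT', cTA', cTB', cBT'⟩ := h.cross hQ hx h' hxT hxT' hzT' hzA hzN huz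
  obtain ⟨-, cA', -, -, -, -⟩ := h'.cross hQ hx h'' hxT' hxT'' hwT'' hwA' hwN huw
  have hA'T : A' ⊆ T := by
    rw [← Finset.inter_eq_right]
    exact Finset.eq_of_subset_of_card_le Finset.inter_subset_right (by omega)
  obtain rfl : w = y := hone _ _ _ h hxT w hwN y hyN (hA'T hwA') hyT
  refine ⟨z, hzN, ?_, ?_⟩
  swap
  · intro v hv
    constructor
    · intro hwv
      rcases h'.sep.cover v with hh | hh | hh
      · exact absurd (huw v hh hv ▸ hwv) (G.loopless.irrefl _)
      · exact hone _ _ _ h' hxT' v hv z hzN hh hzT'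
      · exact absurd hwv (h'.sep.noAdj _ hwA' _ hh)
    · intro hzv
      rcases h.sep.cover v with hh | hh | hh
      · exact absurd (huz v hh hv ▸ hzv) (G.loopless.irrefl _)
      · exact hone _ _ _ h hxT v hv w hwN hh hyT
      · exact absurd hzv (h.sep.noAdj _ hzA _ hh)
  -- If `w` and `z` were not adjacent, they would form the forbidden configuration with their
  -- companions `u'` and `u`.
  by_contra hwz
  obtain ⟨u, hzu, rfl⟩ := exists_eq_pair cA hzA
  obtain ⟨u', hwu', rfl⟩ := exists_eq_pair cA' hwA'
  obtain ⟨s, t, hst, hs⟩ := Finset.card_eq_two.1 cTB'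
  obtain ⟨p, q, hpq, hp⟩ := Finset.card_eq_two.1 cBT'
  have ms : ∀ v, v ∈ T ∧ v ∈ B' ↔ v = s ∨ v = t := by
    intro v; rw [← Finset.mem_inter, hs]; simp
  have mp : ∀ v, v ∈ B ∧ v ∈ T' ↔ v = p ∨ v = q := by
    intro v; rw [← Finset.mem_inter, hp]; simp
  have mx : ∀ v, v ∈ T → v ∈ T' → v = x := by
    intro v h1 h2
    have : v ∈ T ∩ T' := Finset.mem_inter.2 ⟨h1, h2⟩
    rw [hTT'] at this; simpa using this
  obtain ⟨d1, d2, d3, d4, d5⟩ := h.sep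
  obtain ⟨d1', d2', d3', d4', d5'⟩ := h'.sep
  obtain ⟨sT, sB'⟩ := (ms s).2 (Or.inl rfl)
  obtain ⟨tT, tB'⟩ := (ms t).2 (Or.inr rfl)
  obtain ⟨pB, pT'⟩ := (mp p).2 (Or.inl rfl)
  obtain ⟨qB, qT'⟩ := (mp q).2 (Or.inr rfl)
  have uA : u ∈ ({z, u} : Finset V) := by simp
  have uA' : u' ∈ ({w, u'} : Finset V) := by simp
  have uT' : u ∈ T' := hAT' uA
  have uT : u' ∈ T := hA'T uA'
  have inT : ∀ v ∈ T, v = x ∨ v = w ∨ v = u' ∨ v = s ∨ v = t := by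
    intro v hv
    rcases d4' v with hh | hh | hh
    · simp only [Finset.mem_insert, Finset.mem_singleton] at hh; tauto
    · have := mx v hv hh; tauto
    · have := (ms v).1 ⟨hv, hh⟩; tauto
  have inT' : ∀ v ∈ T', v = x ∨ v = z ∨ v = u ∨ v = p ∨ v = q := by
    intro v hv
    rcases d4 v with hh | hh | hh
    · simp only [Finset.mem_insert, Finset.mem_singleton] at hh; tauto
    · have := mx v hh hv; tauto
    · have := (mp v).1 ⟨hh, hv⟩; tauto
  have hxu : ¬ G.Adj x u := fun hh => hzu (huz u uA ((hx.mem u).2 hh)).symm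
  have hxu' : ¬ G.Adj x u' := fun hh => hwu' (huw u' uA' ((hx.mem u').2 hh)).symm
  have hxw := (hx.mem w).1 hyN
  have hxz := (hx.mem z).1 hzN
  have nT : ∀ v ∈ T, v ≠ w → ¬ G.Adj x v := fun v hv hne hh =>
    hne (hone _ _ _ h hxT v ((hx.mem v).2 hh) w hyN hv hyT)
  have nT' : ∀ v ∈ T', v ≠ z → ¬ G.Adj x v := fun v hv hne hh =>
    hne (hone _ _ _ h' hxT' v ((hx.mem v).2 hh) z hzN hv hzT')
  have hd : [x, w, z, u, u', p, q, s, t].Nodup := by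
    have : u ≠ x := by rintro rfl; exact d1 _ uA hxT
    clear * - hxT hxT' d1 d2 d3 d1' d2' d3' hzu hwu' hst hpq hAT' hA'T sT sB' tT tB' pB pT' qB qT'
    have fp : p ∉ T := fun hh => d3 _ hh pB
    have fq : q ∉ T := fun hh => d3 _ hh qB
    have fs : s ∉ T' := fun hh => d3' _ hh sB'
    have ft : t ∉ T' := fun hh => d3' _ hh tB'
    simp only [Finset.mem_insert, Finset.mem_singleton, forall_eq_or_imp, forall_eq,
      Finset.insert_subset_iff, Finset.singleton_subset_iff] at d1 d1' d2 d2' hAT' hA'T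
    clear d3 d3'
    simp only [List.nodup_cons, List.mem_cons, List.not_mem_nil, not_or, or_false,
      List.nodup_nil, not_false_eq_true, and_true]
    and_intros <;> grind
  have au := h.adj_of_pair hQ hx hxT hxu hzu hzN hyN hyT
  have irr : ∀ v, ¬ G.Adj v v := fun v => G.loopless.irrefl v
  have side : ∀ v, G.Adj z v ∨ G.Adj u v → v = z ∨ v = u ∨ v ∈ T := by
    intro v hv
    rcases d4 v with hh | hh | hh
    · simp only [Finset.mem_insert, Finset.mem_singleton] at hh; tauto
    · tauto
    · rcases hv with hv | hv
      · exact absurd hv (d5 _ hzA _ hh)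
      · exact absurd hv (d5 _ uA _ hh)
  have side' : ∀ v, G.Adj w v ∨ G.Adj u' v → v = w ∨ v = u' ∨ v ∈ T' := by
    intro v hv
    rcases d4' v with hh | hh | hh
    · simp only [Finset.mem_insert, Finset.mem_singleton] at hh; tauto
    · tauto
    · rcases hv with hv | hv
      · exact absurd hv (d5' _ hwA' _ hh)
      · exact absurd hv (d5' _ uA' _ hh)
  have kz : ∀ v, G.Adj z v → v = x ∨ v = u ∨ v = u' ∨ v = s ∨ v = t := by
    intro v hv
    rcases side v (Or.inl hv) with rfl | rfl | hh
    · exact absurd hv (irr _)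
    · simp
    · rcases inT v hh with rfl | rfl | rfl | rfl | rfl
      · simp
      · exact absurd hv.symm hwz
      all_goals simp
  have ku : ∀ v, G.Adj u v → v = z ∨ v = w ∨ v = u' ∨ v = s ∨ v = t := by
    intro v hv
    rcases side v (Or.inr hv) with rfl | rfl | hh
    · simp
    · exact absurd hv (irr _)
    · rcases inT v hh with rfl | rfl | rfl | rfl | rfl
      · exact absurd hv.symm hxu
      all_goals simp
  have kw : ∀ v, G.Adj w v → v = x ∨ v = u ∨ v = u' ∨ v = p ∨ v = q := by
    intro v hv
    rcases side' v (Or.inl hv) with rfl | rfl | hh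
    · exact absurd hv (irr _)
    · simp
    · rcases inT' v hh with rfl | rfl | rfl | rfl | rfl
      · simp
      · exact absurd hv hwz
      all_goals simp
  have ku' : ∀ v, G.Adj u' v → v = u ∨ v = w ∨ v = z ∨ v = p ∨ v = q := by
    intro v hv
    rcases side' v (Or.inr hv) with rfl | rfl | hh
    · simp
    · exact absurd hv (irr _)
    · rcases inT' v hh with rfl | rfl | rfl | rfl | rfl
      · exact absurd hv.symm hxu'
      all_goals simp
  obtain ⟨-, -, zu', zs, zt⟩ := adj_of_five kz (hx.deg_one z hxz)
  obtain ⟨-, wu, -, wp, wq⟩ := adj_of_five kw (hx.deg_one w hxw)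
  have nx : ∀ v ∈ T, v ≠ x → v ∈ insert z (T.erase x) := fun v h1 h2 => by simp [h1, h2]
  have hd' := hd
  simp only [List.nodup_cons, List.mem_cons, List.not_mem_nil, not_or, or_false] at hd'
  obtain ⟨⟨xw, xz, xu, xu', xp, xq, xs, xt⟩, ⟨wz, -, -, wp', wq', ws, wt⟩,
    ⟨-, -, zp, zq, -, -⟩, -⟩ := hd'
  obtain ⟨C, S, D, g, hzS, huS⟩ := hg z u' zu' fun c hcz hcu' =>
    hx.deg_two z c hxz hcz.symm (by rintro rfl; exact hxu' hcu')
  exact no_good_of_twins hQ hx hxw hxz (nT' p pT' (Ne.symm zp)) (nT' q qT' (Ne.symm zq))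
    (nT s sT (Ne.symm ws)) (nT t tT (Ne.symm wt)) kz ku kw ku' wp wq wu
    (au s (nx s sT (Ne.symm xs))) (au t (nx t tT (Ne.symm xt))) zs zt
    (d5 _ hzA _ pB) (d5 _ hzA _ qB) (d5' _ hwA' _ sB') (d5' _ hwA' _ tB')
    (d5' _ uA' _ sB') (d5' _ uA' _ tB') hd g hzS huS
/-- In a contraction critical quasi 5-connected graph with the
degree sum condition, the neighborhood of every degree-4 vertex induces `2K₂`. -/
theorem stmt9 {V : Type*} [Fintype V] [DecidableEq V] (G : SimpleGraph V)
    (hcc : ContractionCriticalQuasiFive G) (hdeg : DegSumNine G) :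
    ∀ x : V, (G.neighborSet x).ncard = 4 →
      ∃ x₁ x₂ x₃ x₄ : V, [x₁, x₂, x₃, x₄].Pairwise (· ≠ ·) ∧
        G.neighborSet x = {x₁, x₂, x₃, x₄} ∧
        G.Adj x₁ x₂ ∧ G.Adj x₃ x₄ ∧
        ¬ G.Adj x₁ x₃ ∧ ¬ G.Adj x₁ x₄ ∧ ¬ G.Adj x₂ x₃ ∧ ¬ G.Adj x₂ x₄ := by
  classical
  intro x hx4
  have hfin : ∀ v, (G.neighborSet v).Finite := fun v => Set.toFinite _
  obtain ⟨N, hN⟩ := (hfin x).exists_finset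
  have hNset : G.neighborSet x = (N : Set V) := by ext v; simp [hN]
  have hx : Center G x N := by
    refine ⟨fun v => by simp [hN], ?_, fun v hv => ?_, fun v w hv hw hwx => ?_⟩
    · rw [← Set.ncard_coe_finset, ← hNset, hx4]
    · have := hdeg x v (Or.inl (SimpleGraph.dist_eq_one_iff_adj.2 hv))
      omega
    · have h2 : G.dist x w ≤ 2 := SimpleGraph.dist_le (.cons hv (.cons hw .nil))
      have h0 : G.dist x w ≠ 0 := by
        have hr : G.Reachable x w := hv.reachable.trans hw.reachable
        exact fun h0 => hwx (hr.dist_eq_zero_iff.1 h0).symm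
      have := hdeg x w (by omega)
      omega
  have hQ := hcc.1.qFive
  obtain ⟨y, hy⟩ : N.Nonempty := Finset.card_pos.1 (by rw [hx.card]; omega)
  have hV : 6 ≤ Fintype.card V := by
    have h5 := hx.deg_one y ((hx.mem y).1 hy)
    have h1 : (insert y (G.neighborSet y)).ncard = (G.neighborSet y).ncard + 1 :=
      Set.ncard_insert_of_notMem (by simp)
    have h2 := Set.ncard_le_card (insert y (G.neighborSet y))
    rw [Nat.card_eq_fintype_card] at h2
    omega
  have hg : Covered G := fun a b hab hc => exists_good hQ hV hab (hcc.2 a b hab) hc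
  have hM : Matched G N := by
    by_cases hone : ∀ A T B, Good G A T B → x ∈ T → ∀ a ∈ N, ∀ b ∈ N, a ∈ T → b ∈ T → a = b
    · exact matched_of_one hQ hg hx hone
    · push Not at hone
      obtain ⟨A, T, B, h, hxT, a, ha, b, hb, haT, hbT, hab⟩ := hone
      exact matched_of_two hQ hg hx h hxT hab ha hb haT hbT
  obtain ⟨z, hz, hyz, hyz'⟩ := hM y hy
  have hlt : ({y, z} : Finset V).card < N.card := by
    rw [hx.card]; exact Finset.card_le_two.trans_lt (by omega)
  obtain ⟨a, ha, hayz⟩ := Finset.exists_mem_notMem_of_card_lt_card hlt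
  obtain ⟨b, hb, hab, hab'⟩ := hM a ha
  simp only [Finset.mem_insert, Finset.mem_singleton, not_or] at hayz
  have hby : b ≠ y := by rintro rfl; exact hayz.2 ((hyz' a ha).1 hab.symm)
  have hbz : b ≠ z := by rintro rfl; exact hayz.1 ((hyz' a ha).2 hab.symm)
  have hnd : [y, z, a, b].Nodup := by
    simp [hyz.ne, Ne.symm hayz.1, Ne.symm hayz.2, hby.symm, hbz.symm, hab.ne]
  have hNe : ({y, z, a, b} : Finset V) = N := by
    apply Finset.eq_of_subset_of_card_le
    · intro w hw
      simp only [Finset.mem_insert, Finset.mem_singleton] at hw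
      rcases hw with rfl | rfl | rfl | rfl <;> assumption
    · have := List.toFinset_card_of_nodup hnd
      rw [hx.card]
      simp at this
      omega
  refine ⟨y, z, a, b, hnd, ?_, hyz, hab, ?_, ?_, ?_, ?_⟩
  · rw [hNset, ← hNe]; simp
  · exact fun hh => hayz.2 ((hyz' a ha).1 hh)
  · exact fun hh => hbz ((hyz' b hb).1 hh)
  · exact fun hh => hayz.1 ((hyz' a ha).2 hh)
  · exact fun hh => hby ((hyz' b hb).2 hh)
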